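/- arXiv:2205.08511 — 2 statements merged into one kernel-verified Lean document; each statement's English description precedes it below -/
import Mathlib

section
/- Let d_j be the product of the first j odd primes. Define B_t = { n ∈ ℕ : d_t ∣ n } ∩ [2^{2^{t^2}}, 2^{2^{(t+1)^2}}) and B = ⋃_{t≥1} B_t. Then there is a constant c > 0 such that for all sufficiently large x, the counting function B(x) = #{ n ∈ B : n ≤ x } satisfies B(x) ≥ c · x / exp(3 · sqrt(log log x) · log log log x). -/
open Real Filter

/-- The `i`-th odd prime (1-indexed): `oddPrime 1 = 3`, `oddPrime 2 = 5`, ... -/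
noncomputable def oddPrime (i : ℕ) : ℕ := Nat.nth (fun p => p.Prime ∧ Odd p) (i - 1)

/-- `dProd j` is the product of the first `j` odd primes. -/
noncomputable def dProd (j : ℕ) : ℕ := ∏ i ∈ Finset.Icc 1 j, oddPrime i

/-- `Bt t = { n : dProd t ∣ n } ∩ [2^(2^(t^2)), 2^(2^((t+1)^2)))`. -/
noncomputable def Bt (t : ℕ) : Set ℕ :=
  {n | dProd t ∣ n ∧ 2 ^ 2 ^ t ^ 2 ≤ n ∧ n < 2 ^ 2 ^ (t + 1) ^ 2}

/-- `Bset = ⋃_{t ≥ 1} Bt t`. -/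
noncomputable def Bset : Set ℕ := ⋃ t ≥ 1, Bt t

/-- Counting function of a set of naturals: number of elements `≤ x`. -/
noncomputable def countOf (S : Set ℕ) (x : ℝ) : ℕ := Nat.card {n : ℕ | n ∈ S ∧ (n : ℝ) ≤ x}

/-!
Since `dProd s ∣ dProd t` for `s ≤ t`, every multiple of `dProd t` in `[4, 2 ^ 2 ^ (t + 1) ^ 2)`
lies in `Bset`. So for `t ≥ 2`, where positive multiples of `dProd t` are at least `4`, the set
`Bset` has at least `⌊x / dProd t⌋` elements up to `x` whenever `x < 2 ^ 2 ^ (t + 1) ^ 2`. With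
`L = log (log x)` large, the choice `t = ⌊√(2 * L)⌋` meets this condition, and Chebyshev's bound
gives `dProd t ≤ t ^ (3 * t) ≤ exp (3 * √L * log L)`.
-/

lemma lt_primeCounting_pow_three {n : ℕ} (hn : 5 ≤ n) : n < Nat.primeCounting (n ^ 3) := by
  by_contra! hπ
  have hn' : (5 : ℝ) ≤ n := by exact_mod_cast hn
  have hπ' : (Nat.primeCounting (n ^ 3) : ℝ) ≤ n := by exact_mod_cast hπ
  have psi_le : Chebyshev.psi ((n ^ 3 : ℕ) : ℝ) ≤ n * (3 * (n - 1)) := calc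
    _ ≤ Nat.primeCounting (n ^ 3) * log ((n ^ 3 : ℕ) : ℝ) :=
        Chebyshev.psi_le_primeCounting_mul_log _
    _ = Nat.primeCounting (n ^ 3) * (3 * log n) := by simp
    _ ≤ n * (3 * (n - 1)) := by
        have := log_le_sub_one_of_pos (show (0 : ℝ) < n by linarith)
        gcongr
  have le_psi : (n : ℝ) ^ 3 * log 2 - 3 * n ≤ Chebyshev.psi ((n ^ 3 : ℕ) : ℝ) := by
    refine le_trans ?_ (Chebyshev.psi_ge (n ^ 3))
    have log_succ_le : log ((n : ℝ) ^ 3 + 1) ≤ 3 * n := calc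
      _ ≤ log (((n : ℝ) + 1) ^ 3) := log_le_log (by positivity) (by nlinarith)
      _ = 3 * log ((n : ℝ) + 1) := by rw [log_pow]; norm_num
      _ ≤ 3 * n := by linarith [log_le_sub_one_of_pos (show (0 : ℝ) < n + 1 by linarith)]
    push_cast
    linarith
  have three_lt : 3 < n * log 2 := by nlinarith [log_two_gt_d9]
  nlinarith [mul_lt_mul_of_pos_left three_lt (show (0 : ℝ) < (n : ℝ) ^ 2 by positivity)]

lemma nth_prime_le_pow_three {n : ℕ} (hn : 2 ≤ n) : Nat.nth Nat.Prime n ≤ n ^ 3 := by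
  obtain hn5 | hn5 := lt_or_ge n 5
  · interval_cases n
    · simp [Nat.nth_prime_two_eq_five]
    · simp [Nat.nth_prime_three_eq_seven]
    · simp [Nat.nth_prime_four_eq_eleven]
  · exact Nat.le_of_lt_succ (Nat.nth_lt_of_lt_count (lt_primeCounting_pow_three hn5))

lemma nth_mem_range_of_strictMono {f : ℕ → ℕ} (hf : StrictMono f) (n : ℕ) :
    Nat.nth (· ∈ Set.range f) n = f n := by
  have h := Nat.nth_comp_of_strictMono (p := (· ∈ Set.range f)) (n := n) hf (fun _ hk => hk)
    fun hfin => absurd hfin (Set.infinite_range_of_injective hf.injective)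
  simpa only [Set.mem_range_self, Nat.nth_true] using h.symm

lemma prime_and_odd_iff_mem_range_nth_prime_succ {p : ℕ} :
    p.Prime ∧ Odd p ↔ p ∈ Set.range fun k => Nat.nth Nat.Prime (k + 1) := by
  constructor
  · rintro ⟨hp, hodd⟩
    have count_ne_zero : Nat.count Nat.Prime p ≠ 0 := by
      intro h
      have two_eq := Nat.nth_count hp
      rw [h, Nat.nth_prime_zero_eq_two] at two_eq
      exact absurd hodd (two_eq ▸ by decide)
    exact ⟨Nat.count Nat.Prime p - 1, by
      simp only [Nat.sub_one_add_one count_ne_zero, Nat.nth_count hp]⟩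
  · rintro ⟨k, rfl⟩
    have two_lt : 2 < Nat.nth Nat.Prime (k + 1) := by
      simpa only [Nat.nth_prime_zero_eq_two] using
        Nat.nth_strictMono Nat.infinite_setOfPred_prime k.succ_pos
    exact ⟨Nat.prime_nth_prime _, (Nat.prime_nth_prime _).odd_of_ne_two two_lt.ne'⟩

lemma oddPrime_eq_nth_prime {i : ℕ} (hi : 1 ≤ i) : oddPrime i = Nat.nth Nat.Prime i := by
  have strictMono_nth_succ : StrictMono fun k => Nat.nth Nat.Prime (k + 1) :=
    (Nat.nth_strictMono Nat.infinite_setOfPred_prime).comp (strictMono_id.add_const 1)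
  simp only [oddPrime, prime_and_odd_iff_mem_range_nth_prime_succ,
    nth_mem_range_of_strictMono strictMono_nth_succ, Nat.sub_add_cancel hi]

lemma three_le_oddPrime {i : ℕ} (hi : 1 ≤ i) : 3 ≤ oddPrime i := by
  rw [oddPrime_eq_nth_prime hi, ← Nat.nth_prime_one_eq_three]
  exact Nat.nth_monotone Nat.infinite_setOfPred_prime hi

lemma oddPrime_le_pow_three {i t : ℕ} (hi : 1 ≤ i) (hit : i ≤ t) (ht : 2 ≤ t) :
    oddPrime i ≤ t ^ 3 := by
  rw [oddPrime_eq_nth_prime hi]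
  exact (Nat.nth_monotone Nat.infinite_setOfPred_prime hit).trans (nth_prime_le_pow_three ht)

lemma three_pow_le_dProd (t : ℕ) : 3 ^ t ≤ dProd t := by
  simpa [dProd] using Finset.pow_card_le_prod (Finset.Icc 1 t) oddPrime 3
    fun i hi => three_le_oddPrime (Finset.mem_Icc.1 hi).1

lemma dProd_pos (t : ℕ) : 0 < dProd t :=
  (by positivity : 0 < 3 ^ t).trans_le (three_pow_le_dProd t)

lemma dProd_le_pow {t : ℕ} (ht : 2 ≤ t) : dProd t ≤ (t ^ 3) ^ t := by
  simpa [dProd] using Finset.prod_le_pow_card (Finset.Icc 1 t) oddPrime (t ^ 3) fun i hi =>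
    oddPrime_le_pow_three (Finset.mem_Icc.1 hi).1 (Finset.mem_Icc.1 hi).2 ht

lemma log_dProd_le {t : ℕ} (ht : 2 ≤ t) : log (dProd t) ≤ 3 * (t * log t) := calc
  log (dProd t) ≤ log (((t : ℝ) ^ 3) ^ t) :=
    log_le_log (by exact_mod_cast dProd_pos t) (by exact_mod_cast dProd_le_pow ht)
  _ = 3 * (t * log t) := by
    rw [log_pow, log_pow]
    push_cast
    ring

lemma dProd_dvd_dProd_succ (t : ℕ) : dProd t ∣ dProd (t + 1) :=
  Finset.prod_dvd_prod_of_subset _ _ _ (Finset.Icc_subset_Icc_right t.le_succ)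

lemma mem_Bset_of_dProd_dvd {t n : ℕ} (hd : dProd t ∣ n) (hn : 4 ≤ n)
    (hlt : n < 2 ^ 2 ^ (t + 1) ^ 2) : n ∈ Bset := by
  induction t with
  | zero =>
    have hlt4 : n < 4 := by simpa using hlt
    exact absurd hlt4 hn.not_gt
  | succ t ih =>
    obtain hsmall | hlarge := lt_or_ge n (2 ^ 2 ^ (t + 1) ^ 2)
    · exact ih ((dProd_dvd_dProd_succ t).trans hd) hsmall
    · exact Set.mem_iUnion₂.2 ⟨t + 1, t.succ_pos, hd, hlarge, hlt⟩

lemma floor_div_le_countOf {S : Set ℕ} {d : ℕ} {x : ℝ}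
    (hS : ∀ n : ℕ, 0 < n → d ∣ n → (n : ℝ) ≤ x → n ∈ S) : ⌊x⌋₊ / d ≤ countOf S x := by
  have hfin : {n : ℕ | n ∈ S ∧ (n : ℝ) ≤ x}.Finite :=
    (Set.finite_Iic ⌊x⌋₊).subset fun n hn => Nat.le_floor hn.2
  rw [← Nat.Ioc_filter_dvd_card_eq_div, ← Set.ncard_coe_finset]
  refine Set.ncard_le_ncard (fun n hn => ?_) hfin
  simp only [Finset.coe_filter, Finset.mem_Ioc, Set.mem_ofPred_eq] at hn
  obtain ⟨⟨hpos, hle⟩, hdvd⟩ := hn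
  have hnx : (n : ℝ) ≤ x := (Nat.le_floor_iff' hpos.ne').1 hle
  exact ⟨hS n hpos hdvd hnx, hnx⟩

lemma div_dProd_div_two_le_countOf_Bset {t : ℕ} {x : ℝ} (ht : 2 ≤ t) (hd : dProd t ≤ x)
    (hx : x < 2 ^ 2 ^ (t + 1) ^ 2) : x / dProd t / 2 ≤ countOf Bset x := by
  have hd0 : (0 : ℝ) < dProd t := by exact_mod_cast dProd_pos t
  have four_le : 4 ≤ dProd t := calc
    4 ≤ 3 ^ 2 := by norm_num
    _ ≤ 3 ^ t := Nat.pow_le_pow_right (by norm_num) ht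
    _ ≤ dProd t := three_pow_le_dProd t
  calc
    x / dProd t / 2 ≤ ⌊x / dProd t⌋₊ := (Nat.div_two_lt_floor ((one_le_div hd0).2 hd)).le
    _ = ((⌊x⌋₊ / dProd t : ℕ) : ℝ) := by rw [Nat.floor_div_natCast]
    _ ≤ countOf Bset x := by
      refine Nat.cast_le.2 (floor_div_le_countOf fun n hn hdvd hnx => ?_)
      exact mem_Bset_of_dProd_dvd hdvd (four_le.trans (Nat.le_of_dvd hn hdvd))
        (by exact_mod_cast hnx.trans_lt hx)

lemma exp_exp_lt_two_pow_two_pow {L : ℝ} {m : ℕ} (hL : 2 ≤ L) (hm : 2 * L ≤ m) :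
    exp (exp L) < 2 ^ 2 ^ m := by
  have hlog2 := log_two_gt_d9
  have exp_lt : exp L < 2 ^ m * log 2 := calc
    exp L < exp (m * log 2 - log 2) := exp_lt_exp.2 (by nlinarith)
    _ = 2 ^ m / 2 := by rw [exp_sub, exp_nat_mul, exp_log two_pos]
    _ ≤ 2 ^ m * log 2 := by
      rw [div_eq_mul_inv]
      gcongr
      linarith
  calc
    exp (exp L) < exp ((2 ^ m : ℕ) * log 2) := exp_lt_exp.2 (by exact_mod_cast exp_lt)
    _ = 2 ^ 2 ^ m := by rw [exp_nat_mul, exp_log two_pos]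

lemma sqrt_two_mul_mul_log_le {L : ℝ} (hL : 16 ≤ L) :
    √(2 * L) * log √(2 * L) ≤ √L * log L := by
  have hlogL : 4 * log 2 ≤ log L := by
    rw [← log_rpow two_pos]
    exact log_le_log (by positivity) (by norm_num; exact hL)
  have hlog2 : 0 < log 2 := log_pos one_lt_two
  have hsqrt2 : √2 ≤ 1.6 := sqrt_le_iff.2 (by norm_num)
  calc
    √(2 * L) * log √(2 * L) = √L * (√2 * ((log 2 + log L) / 2)) := by
      rw [log_sqrt (by positivity), log_mul two_ne_zero (by positivity), sqrt_mul zero_le_two]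
      ring
    _ ≤ √L * (1.6 * ((log L / 4 + log L) / 2)) := by
      gcongr <;> linarith
    _ = √L * log L := by ring

lemma dProd_floor_sqrt_le_exp {L : ℝ} (hL : 16 ≤ L) :
    dProd ⌊√(2 * L)⌋₊ ≤ exp (3 * √L * log L) := by
  set t := ⌊√(2 * L)⌋₊
  have ht : 2 ≤ t := Nat.le_floor (le_sqrt_of_sq_le (by norm_num; linarith))
  have ht_le : (t : ℝ) ≤ √(2 * L) := Nat.floor_le (sqrt_nonneg _)
  have hlog_le : log t ≤ log √(2 * L) :=
    log_le_log (by exact_mod_cast two_pos.trans_le ht) ht_le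
  rw [← log_le_iff_le_exp (by exact_mod_cast dProd_pos t)]
  calc
    log (dProd t) ≤ 3 * (t * log t) := log_dProd_le ht
    _ ≤ 3 * (√(2 * L) * log √(2 * L)) := by gcongr
    _ ≤ 3 * (√L * log L) := mul_le_mul_of_nonneg_left (sqrt_two_mul_mul_log_le hL) zero_le_three
    _ = 3 * √L * log L := by ring

lemma three_mul_sqrt_mul_log_le_exp {L : ℝ} (hL : 10 ≤ L) : 3 * √L * log L ≤ exp L := by
  have log_le : log L ≤ 2 * √L := by
    linarith [log_sqrt (show 0 ≤ L by linarith), log_le_self (sqrt_nonneg L)]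
  calc
    3 * √L * log L ≤ 3 * √L * (2 * √L) := by gcongr
    _ = 6 * L := by linear_combination 6 * mul_self_sqrt (show 0 ≤ L by linarith)
    _ ≤ 1 + L + L ^ 2 / 2 := by nlinarith
    _ ≤ exp L := quadratic_le_exp_of_nonneg (by linarith)

theorem stmt_3 : ∃ c : ℝ, 0 < c ∧ ∀ᶠ x : ℝ in atTop,
    (countOf Bset x : ℝ) ≥
      c * x / Real.exp (3 * Real.sqrt (Real.log (Real.log x)) *
        Real.log (Real.log (Real.log x))) := by
  refine ⟨1 / 2, by norm_num, ?_⟩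
  filter_upwards [(tendsto_log_atTop.comp tendsto_log_atTop).eventually_ge_atTop 16,
    eventually_gt_atTop 1] with x (hL : 16 ≤ log (log x)) hx
  set L := log (log x)
  set t := ⌊√(2 * L)⌋₊
  have hxL : exp (exp L) = x := by rw [exp_log (log_pos hx), exp_log (by linarith)]
  have ht : 2 ≤ t := Nat.le_floor (le_sqrt_of_sq_le (by norm_num; linarith))
  have ht_sq : 2 * L ≤ ((t + 1) ^ 2 : ℕ) := by
    push_cast
    exact (sqrt_le_left (by positivity)).1 (Nat.lt_floor_add_one _).le
  have hx_lt : x < 2 ^ 2 ^ (t + 1) ^ 2 := hxL ▸ exp_exp_lt_two_pow_two_pow (by linarith) ht_sq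
  have hd : dProd t ≤ exp (3 * √L * log L) := dProd_floor_sqrt_le_exp hL
  have hd_le : dProd t ≤ x :=
    hd.trans (hxL ▸ exp_le_exp.2 (three_mul_sqrt_mul_log_le_exp (by linarith)))
  have hd_pos : (0 : ℝ) < dProd t := by exact_mod_cast dProd_pos t
  calc
    1 / 2 * x / exp (3 * √L * log L) ≤ 1 / 2 * x / dProd t := by gcongr
    _ = x / dProd t / 2 := by ring
    _ ≤ countOf Bset x := div_dProd_div_two_le_countOf_Bset ht hd_le hx_lt
end

section
/- Let C = { 2^a + b : a ∈ ℕ, b ∈ B } where B = ⋃_{t≥1} ({ n : d_t ∣ n } ∩ [2^{2^{t^2}}, 2^{2^{(t+1)^2}})) and d_t is the product of the first t odd primes. Then the counting function C(x) = #{ c ∈ C : c ≤ x } satisfies C(x) = O(x / log log log x); in particular C(x) = o(x) as x → ∞. -/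
open Real Filter

/-- `Cset = { 2^a + b : a ≥ 1, b ∈ Bset }`. -/
noncomputable def Cset : Set ℕ := {c | ∃ a : ℕ, 1 ≤ a ∧ ∃ b ∈ Bset, c = 2 ^ a + b}

/-!
Let `D` be the product of the odd primes up to `t`. It divides `dProd s` for every `s ≥ t`, so if
`b ∈ Bset` is at least `2 ^ 2 ^ t ^ 2` then `2 ^ a + b` is congruent to `2 ^ a` modulo `D` and hence
coprime to `D`. By Mertens' estimate such integers have density `φ(D) / D ≤ 2 / log (t + 1)`, while
the remaining `2 ^ a + b ≤ x` number at most `2 ^ 2 ^ t ^ 2 * (log₂ x + 1)`. Taking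
`t = ⌊√(log log x)⌋` makes the first contribution `O(x / log log log x)`, and bounds `2 ^ 2 ^ t ^ 2`
by `x ^ log 2`, where `log 2 < 1`.
-/

open Asymptotics

theorem log_add_one_le_prod_primesLE (n : ℕ) :
    log (n + 1) ≤ ∏ p ∈ n.primesLE, (1 - (p : ℝ)⁻¹)⁻¹ := by
  let recip : ℕ →* ℝ := invMonoidHom.comp (Nat.castRingHom ℝ : ℕ →* ℝ)
  have recip_lt_one {p : ℕ} (hp : p.Prime) : ‖recip p‖ < 1 := by
    simpa [recip] using inv_lt_one_of_one_lt₀ (Nat.one_lt_cast (α := ℝ).2 hp.one_lt)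
  have smooth_sum : HasSum ((n + 1).smoothNumbers.indicator recip)
      (∏ p ∈ n.primesLE, (1 - recip p)⁻¹) :=
    hasSum_subtype_iff_indicator.1
      (EulerProduct.summable_and_hasSum_smoothNumbers_prod_primesBelow_geometric
        recip_lt_one (n + 1)).2
  have mem_smooth {k : ℕ} (hk : k ∈ Finset.Icc 1 n) : k ∈ (n + 1).smoothNumbers := by
    rw [Finset.mem_Icc] at hk
    exact Nat.mem_smoothNumbers_of_lt (by omega) (by omega)
  calc log (n + 1) ≤ (harmonic n : ℝ) := by exact_mod_cast log_add_one_le_harmonic n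
    _ = ∑ k ∈ Finset.Icc 1 n, recip k := by simp [harmonic_eq_sum_Icc, recip]
    _ = ∑ k ∈ Finset.Icc 1 n, (n + 1).smoothNumbers.indicator recip k :=
      Finset.sum_congr rfl fun k hk ↦ (Set.indicator_of_mem (mem_smooth hk) recip).symm
    _ ≤ ∏ p ∈ n.primesLE, (1 - (p : ℝ)⁻¹)⁻¹ :=
      sum_le_hasSum _ (fun k _ ↦ Set.indicator_nonneg (fun m _ ↦ by simp [recip]) k) smooth_sum

theorem log_add_one_mul_totient_primorial_le (n : ℕ) :
    log (n + 1) * (primorial n).totient ≤ primorial n := by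
  set P := ∏ p ∈ n.primesLE, (1 - (p : ℝ)⁻¹)
  have P_pos : 0 < P := Finset.prod_pos fun p hp ↦
    sub_pos.2 (inv_lt_one_of_one_lt₀ (Nat.one_lt_cast.2 (Nat.one_lt_of_mem_primesLE hp)))
  have totient_eq : ((primorial n).totient : ℝ) = primorial n * P := by
    have h := congrArg (Rat.cast : ℚ → ℝ) (Nat.totient_eq_mul_prod_factors (primorial n))
    rw [primeFactors_primorial] at h
    push_cast at h
    exact h
  have log_le : log (n + 1) ≤ P⁻¹ := by
    simpa only [Finset.prod_inv_distrib] using log_add_one_le_prod_primesLE n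
  calc log (n + 1) * (primorial n).totient ≤ P⁻¹ * (primorial n).totient := by gcongr
    _ = primorial n := by rw [totient_eq]; field_simp

/-- The product of the odd primes up to `n`, that is, the odd part of `primorial n`. It divides
`dProd n`, the product of the first `n` odd primes, and replaces it as a modulus because it is
at most `4 ^ n`. -/
def oddPrimorial (n : ℕ) : ℕ := ∏ p ∈ n.primesLE.erase 2, p

namespace oddPrimorial

variable {n : ℕ}

theorem prime_of_mem {p : ℕ} (hp : p ∈ n.primesLE.erase 2) : p.Prime :=
  Nat.prime_of_mem_primesLE (Finset.mem_of_mem_erase hp)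

theorem odd_of_mem {p : ℕ} (hp : p ∈ n.primesLE.erase 2) : Odd p :=
  (prime_of_mem hp).odd_of_ne_two (Finset.ne_of_mem_erase hp)

theorem odd (n : ℕ) : Odd (oddPrimorial n) :=
  Finset.prod_induction _ Odd (fun _ _ ↦ Odd.mul) odd_one fun _ ↦ odd_of_mem

theorem two_mul_eq_primorial (hn : 2 ≤ n) : 2 * oddPrimorial n = primorial n :=
  Finset.mul_prod_erase n.primesLE id (Nat.mem_primesLE.2 ⟨hn, Nat.prime_two⟩)

theorem le_four_pow (n : ℕ) : oddPrimorial n ≤ 4 ^ n :=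
  (Finset.prod_le_prod_of_subset_of_one_le' (Finset.erase_subset 2 n.primesLE)
    fun _ hp _ ↦ (Nat.one_lt_of_mem_primesLE hp).le).trans (primorial_le_four_pow n)

theorem log_add_one_mul_totient_le (hn : 2 ≤ n) :
    log (n + 1) * (oddPrimorial n).totient ≤ 2 * oddPrimorial n := by
  have h := log_add_one_mul_totient_primorial_le n
  rw [← two_mul_eq_primorial hn, Nat.totient_two_mul_of_odd (odd n)] at h
  exact_mod_cast h

end oddPrimorial

theorem prime_dvd_dProd {p n : ℕ} (hp : p.Prime) (hodd : Odd p) (hpn : p ≤ n) : p ∣ dProd n := by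
  classical
  let isOddPrime : ℕ → Prop := fun q ↦ q.Prime ∧ Odd q
  have count_lt : Nat.count isOddPrime p < p := by
    obtain ⟨q, rfl⟩ := Nat.exists_eq_add_one.2 hp.pos
    rw [Nat.count_succ', if_neg fun h ↦ Nat.not_prime_zero h.1]
    exact Nat.lt_succ_of_le (Nat.count_le _)
  have nth_eq : oddPrime (Nat.count isOddPrime p + 1) = p :=
    Nat.nth_count (p := isOddPrime) ⟨hp, hodd⟩
  rw [← nth_eq]
  exact Finset.dvd_prod_of_mem oddPrime (Finset.mem_Icc.2 ⟨by omega, by omega⟩)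

theorem oddPrimorial_dvd_dProd {m n : ℕ} (hmn : m ≤ n) : oddPrimorial m ∣ dProd n :=
  Finset.prod_primes_dvd _ (fun _ hp ↦ (oddPrimorial.prime_of_mem hp).prime) fun _ hp ↦
    prime_dvd_dProd (oddPrimorial.prime_of_mem hp) (oddPrimorial.odd_of_mem hp)
      ((Nat.le_of_mem_primesLE (Finset.mem_of_mem_erase hp)).trans hmn)

theorem card_range_filter_coprime_le {D : ℕ} (hD : D ≠ 0) (n : ℕ) :
    (((Finset.range n).filter D.Coprime).card : ℝ) ≤ n * (D.totient / D) + D.totient := by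
  have h : ((Finset.range n).filter D.Coprime).card ≤ D.totient * (n / D + 1) := by
    simpa only [zero_add, Finset.range_eq_Ico] using Nat.Ico_filter_coprime_le 0 n hD
  calc (((Finset.range n).filter D.Coprime).card : ℝ)
      ≤ D.totient * ((n / D : ℕ) + 1) := by exact_mod_cast h
    _ ≤ D.totient * ((n : ℝ) / D + 1) := by gcongr; exact Nat.cast_div_le
    _ = n * (D.totient / D) + D.totient := by ring

theorem countOf_le_card {S : Set ℕ} {x : ℝ} {F : Finset ℕ}
    (h : ∀ n ∈ S, n ≤ ⌊x⌋₊ → n ∈ F) : countOf S x ≤ F.card := by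
  have subset : {n : ℕ | n ∈ S ∧ (n : ℝ) ≤ x} ⊆ F := fun n hn ↦ h n hn.1 (Nat.le_floor hn.2)
  simpa only [countOf, Nat.card_coe_set_eq, Set.ncard_coe_finset] using
    Set.ncard_le_ncard subset F.finite_toSet

theorem countOf_le_of_forall_eq_pow_add {S : Set ℕ} {g D N : ℕ} (hg : 1 < g) (hD : D.Coprime g)
    (hS : ∀ n ∈ S, ∃ a b, n = g ^ a + b ∧ (D ∣ b ∨ b < N)) (x : ℝ) :
    countOf S x ≤ ((Finset.range (⌊x⌋₊ + 1)).filter D.Coprime).card +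
      (Nat.log g ⌊x⌋₊ + 1) * N := by
  set coprimes := (Finset.range (⌊x⌋₊ + 1)).filter D.Coprime
  set small := Finset.image₂ (fun a b ↦ g ^ a + b) (Finset.range (Nat.log g ⌊x⌋₊ + 1))
    (Finset.range N)
  have mem_union : ∀ n ∈ S, n ≤ ⌊x⌋₊ → n ∈ coprimes ∪ small := by
    intro n hn hnx
    obtain ⟨a, b, rfl, ⟨m, rfl⟩ | hb⟩ := hS n hn
    · refine Finset.mem_union_left _ (Finset.mem_filter.2 ⟨Finset.mem_range_succ_iff.2 hnx, ?_⟩)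
      exact (Nat.coprime_add_mul_left_right D (g ^ a) m).2 (hD.pow_right a)
    · have a_le : a ≤ Nat.log g ⌊x⌋₊ := Nat.le_log_of_pow_le hg (by omega)
      exact Finset.mem_union_right _ (Finset.mem_image₂_of_mem
        (Finset.mem_range_succ_iff.2 a_le) (Finset.mem_range.2 hb))
  calc countOf S x ≤ (coprimes ∪ small).card := countOf_le_card mem_union
    _ ≤ coprimes.card + small.card := Finset.card_union_le _ _
    _ ≤ coprimes.card + (Nat.log g ⌊x⌋₊ + 1) * N := by
      gcongr
      simpa only [Finset.card_range] using Finset.card_image₂_le (fun a b ↦ g ^ a + b)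
        (Finset.range (Nat.log g ⌊x⌋₊ + 1)) (Finset.range N)

theorem oddPrimorial_dvd_or_lt_of_mem_Bset {b : ℕ} (hb : b ∈ Bset) (t : ℕ) :
    oddPrimorial t ∣ b ∨ b < 2 ^ 2 ^ t ^ 2 := by
  simp only [Bset, Set.mem_iUnion] at hb
  obtain ⟨s, -, dvd_b, -, b_lt⟩ := hb
  obtain hts | hst := le_or_gt t s
  · exact .inl ((oddPrimorial_dvd_dProd hts).trans dvd_b)
  · exact .inr (b_lt.trans_le (by gcongr <;> omega))

theorem four_pow_le_two_pow_two_pow_sq (t : ℕ) : 4 ^ t ≤ 2 ^ 2 ^ t ^ 2 := by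
  have h : 2 * t ≤ 2 ^ t ^ 2 := (Nat.mul_le_pow (by norm_num) t).trans
    (Nat.pow_le_pow_right two_pos (Nat.le_self_pow two_ne_zero t))
  calc 4 ^ t = 2 ^ (2 * t) := by rw [pow_mul]; norm_num
    _ ≤ 2 ^ 2 ^ t ^ 2 := by gcongr; norm_num

theorem countOf_Cset_le {t : ℕ} (ht : 2 ≤ t) {x : ℝ} (hx : 1 ≤ x) :
    (countOf Cset x : ℝ) ≤ 4 * x / log (t + 1) + 2 ^ 2 ^ t ^ 2 * (Nat.log 2 ⌊x⌋₊ + 2) := by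
  set D := oddPrimorial t
  have D_pos : 0 < D := (oddPrimorial.odd t).pos
  have log_pos : 0 < log (t + 1) := Real.log_pos (by norm_cast; omega)
  have density_le : (D.totient / D : ℝ) ≤ 2 / log (t + 1) := by
    rw [div_le_div_iff₀ (by exact_mod_cast D_pos) log_pos, mul_comm]
    exact oddPrimorial.log_add_one_mul_totient_le ht
  have totient_le : (D.totient : ℝ) ≤ 2 ^ 2 ^ t ^ 2 := by
    exact_mod_cast (Nat.totient_le D).trans
      ((oddPrimorial.le_four_pow t).trans (four_pow_le_two_pow_two_pow_sq t))
  have floor_le : ((⌊x⌋₊ + 1 : ℕ) : ℝ) ≤ 2 * x := by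
    push_cast
    linarith [Nat.floor_le (zero_le_one.trans hx)]
  have decomposition : ∀ n ∈ Cset, ∃ a b, n = 2 ^ a + b ∧ (D ∣ b ∨ b < 2 ^ 2 ^ t ^ 2) := by
    rintro n ⟨a, -, b, hb, rfl⟩
    exact ⟨a, b, rfl, oddPrimorial_dvd_or_lt_of_mem_Bset hb t⟩
  calc (countOf Cset x : ℝ)
      ≤ ((Finset.range (⌊x⌋₊ + 1)).filter D.Coprime).card +
          (Nat.log 2 ⌊x⌋₊ + 1) * 2 ^ 2 ^ t ^ 2 := by
        exact_mod_cast countOf_le_of_forall_eq_pow_add one_lt_two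
          (oddPrimorial.odd t).coprime_two_right decomposition x
    _ ≤ 2 * x * (2 / log (t + 1)) + 2 ^ 2 ^ t ^ 2 +
          (Nat.log 2 ⌊x⌋₊ + 1) * 2 ^ 2 ^ t ^ 2 := by
        grw [card_range_filter_coprime_le D_pos.ne', floor_le, density_le, totient_le]
    _ = 4 * x / log (t + 1) + 2 ^ 2 ^ t ^ 2 * (Nat.log 2 ⌊x⌋₊ + 2) := by ring

theorem natLog_two_floor_le {x : ℝ} (hx : 1 ≤ x) : (Nat.log 2 ⌊x⌋₊ : ℝ) ≤ 2 * log x := by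
  have pow_le : (2 : ℝ) ^ Nat.log 2 ⌊x⌋₊ ≤ x := by
    exact_mod_cast (Nat.le_floor_iff (zero_le_one.trans hx)).1
      (Nat.pow_log_le_self 2 (Nat.floor_pos.2 hx).ne')
  have mul_log_two_le : Nat.log 2 ⌊x⌋₊ * log 2 ≤ log x := by
    simpa only [log_pow] using log_le_log (by positivity) pow_le
  nlinarith [log_two_gt_d9]

theorem two_pow_two_pow_le_rpow_log_two {x : ℝ} {m : ℕ} (hx : 1 < x) (hm : m ≤ log (log x)) :
    (2 : ℝ) ^ 2 ^ m ≤ x ^ log 2 := by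
  have two_pow_le : (2 : ℝ) ^ m ≤ log x :=
    calc (2 : ℝ) ^ m ≤ exp 1 ^ m := by gcongr; exact exp_one_gt_d9.le.trans' (by norm_num)
      _ = exp m := by rw [← exp_nat_mul, mul_one]
      _ ≤ log x := (le_log_iff_exp_le (log_pos hx)).1 hm
  calc (2 : ℝ) ^ 2 ^ m = exp (log 2 * 2 ^ m) := by
        rw [← rpow_natCast, rpow_def_of_pos two_pos]; norm_cast
    _ ≤ exp (log 2 * log x) := by gcongr
    _ = x ^ log 2 := by rw [rpow_def_of_pos (one_pos.trans hx), mul_comm]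

theorem countOf_Cset_le_add_rpow {x : ℝ} (hx : exp (exp 4) ≤ x) :
    (countOf Cset x : ℝ) ≤ 8 * (x / log (log (log x))) + 4 * (x ^ log 2 * log x) := by
  have x_gt_one : 1 < x := hx.trans_lt' (one_lt_exp_iff.2 (exp_pos 4))
  have log_ge : exp 4 ≤ log x := (le_log_iff_exp_le (one_pos.trans x_gt_one)).2 hx
  have loglog_ge : 4 ≤ log (log x) := (le_log_iff_exp_le (log_pos x_gt_one)).2 log_ge
  set t := ⌊√(log (log x))⌋₊
  have t_ge : 2 ≤ t := Nat.le_floor (le_sqrt_of_sq_le (by norm_num [loglog_ge]))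
  have sq_le : ((t ^ 2 : ℕ) : ℝ) ≤ log (log x) := by
    push_cast
    exact (le_sqrt (by positivity) (by linarith)).1 (Nat.floor_le (sqrt_nonneg _))
  have logloglog_le : log (log (log x)) ≤ 2 * log (t + 1) := by
    have h : log (log x) ≤ (t + 1) ^ 2 :=
      (sqrt_le_left (by positivity)).1 (Nat.lt_floor_add_one _).le
    simpa only [log_pow, Nat.cast_ofNat] using log_le_log (by linarith) h
  have logloglog_pos : 0 < log (log (log x)) := log_pos (by linarith)
  have main_term_le : 4 * x / log (t + 1) ≤ 8 * (x / log (log (log x))) := by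
    rw [← mul_div_assoc, div_le_div_iff₀ (by linarith) logloglog_pos]
    nlinarith
  have natLog_le : (Nat.log 2 ⌊x⌋₊ + 2 : ℝ) ≤ 4 * log x := by
    linarith [natLog_two_floor_le x_gt_one.le, one_le_exp (zero_le_four (α := ℝ))]
  calc (countOf Cset x : ℝ)
      ≤ 4 * x / log (t + 1) + 2 ^ 2 ^ t ^ 2 * (Nat.log 2 ⌊x⌋₊ + 2) :=
        countOf_Cset_le t_ge x_gt_one.le
    _ ≤ 8 * (x / log (log (log x))) + x ^ log 2 * (4 * log x) := by
        gcongr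
        exact two_pow_two_pow_le_rpow_log_two x_gt_one sq_le
    _ = 8 * (x / log (log (log x))) + 4 * (x ^ log 2 * log x) := by ring

theorem tendsto_log_log_log_atTop : Tendsto (fun x ↦ log (log (log x))) atTop atTop :=
  tendsto_log_atTop.comp (tendsto_log_atTop.comp tendsto_log_atTop)

theorem isLittleO_div_log_log_log_id_atTop :
    (fun x ↦ x / log (log (log x))) =o[atTop] (fun x : ℝ ↦ x) := by
  simpa only [div_eq_mul_inv, mul_one, Pi.inv_apply] using
    (isBigO_refl (fun x : ℝ ↦ x) atTop).mul_isLittleO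
      ((isLittleO_one_iff ℝ).2 tendsto_log_log_log_atTop.inv_tendsto_atTop)

theorem isBigO_rpow_mul_log_div_log_log_log_atTop {s : ℝ} (hs : s < 1) :
    (fun x ↦ x ^ s * log x) =O[atTop] fun x ↦ x / log (log (log x)) := by
  have logloglog_isBigO : (fun x ↦ log (log (log x))) =O[atTop] log := by
    have log_isBigO := isLittleO_log_id_atTop.isBigO
    exact ((log_isBigO.comp_tendsto tendsto_log_atTop).comp_tendsto tendsto_log_atTop).trans
      (log_isBigO.comp_tendsto tendsto_log_atTop)
  have log_sq_isBigO : (fun x ↦ log x * log x) =O[atTop] fun x ↦ x ^ (1 - s) := by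
    simpa only [rpow_two, sq] using (isLittleO_log_rpow_rpow_atTop 2 (sub_pos.2 hs)).isBigO
  have h : (fun x ↦ x ^ s * (log x * log (log (log x)))) =O[atTop] fun x ↦ x ^ s * x ^ (1 - s) :=
    (isBigO_refl _ _).mul (((isBigO_refl _ _).mul logloglog_isBigO).trans log_sq_isBigO)
  refine (h.mul (isBigO_refl (fun x ↦ (log (log (log x)))⁻¹) atTop)).congr' ?_ ?_
  · filter_upwards [tendsto_log_log_log_atTop.eventually_gt_atTop 0] with x hx
    field_simp
  · filter_upwards [eventually_gt_atTop 0] with x hx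
    rw [← rpow_add hx, add_sub_cancel, rpow_one, div_eq_mul_inv]

theorem stmt_11 :
    ((fun x : ℝ => (countOf Cset x : ℝ)) =O[atTop]
        fun x : ℝ => x / Real.log (Real.log (Real.log x))) ∧
      (fun x : ℝ => (countOf Cset x : ℝ)) =o[atTop] (fun x : ℝ => x) := by
  have bound : (fun x ↦ (countOf Cset x : ℝ)) =O[atTop]
      fun x ↦ 8 * (x / log (log (log x))) + 4 * (x ^ log 2 * log x) := by
    refine IsBigO.of_bound' ?_
    filter_upwards [eventually_ge_atTop (exp (exp 4))] with x hx
    rw [norm_natCast]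
    exact (countOf_Cset_le_add_rpow hx).trans (le_norm_self _)
  have log_two_lt_one : log 2 < 1 := log_two_lt_d9.trans (by norm_num)
  have isBigO : (fun x ↦ (countOf Cset x : ℝ)) =O[atTop] fun x ↦ x / log (log (log x)) :=
    bound.trans (((isBigO_refl _ _).const_mul_left 8).add
      ((isBigO_rpow_mul_log_div_log_log_log_atTop log_two_lt_one).const_mul_left 4))
  exact ⟨isBigO, isBigO.trans_isLittleO isLittleO_div_log_log_log_id_atTop⟩
end
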